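/- arXiv:1907.05799 — 3 statements merged into one kernel-verified Lean document; each statement's English description precedes it below -/
import Mathlib

section
/- Let S ⊆ ℝ^d be a bounded measurable set, let μ be a probability measure on ℝ^d with μ(S) = 1, and let {S_i}_{i ∈ I} be a finite family of convex measurable subsets of S such that μ(S_i) > 0 for every i, μ(S_i ∩ S_j) = 0 for i ≠ j, μ(⋃_{i ∈ I} S_i) = 1, and diam(S_i) ≤ ρ for every i, where 0 < ρ ≤ 1 and diam denotes the Euclidean diameter. Let q : ℝ^d → ℝ take values in [0,1] on S, be differentiable on S with ‖∇q(x)‖₂ ≤ L for all x ∈ S, and satisfy the Taylor bound |q(x) − q(y) − ⟨∇q(y), x − y⟩| ≤ H‖x − y‖₂² for all x, y ∈ S. Define q̂ : S → ℝ by q̂(x) := (1/μ(S_i)) ∫_{S_i} q dμ whenever x lies in exactly one cell S_i (with arbitrary values on the μ-null remainder). Then for every p ∈ [1, ∞), ‖q − q̂‖_{L^p(μ)} ≤ 2(L + H)ρ. -/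
open MeasureTheory

/-!
An average of `f` over a cell lies in the closed convex hull of the values of `f` there, and neither
convex hull nor closure increases the diameter. Hence `f` deviates from its average by at most its
oscillation on the cell, which the Taylor bound controls.
-/

open Metric Set
open scoped ENNReal

section Oscillation

variable {𝕜 E F : Type*} [NontriviallyNormedField 𝕜] [NormedAddCommGroup E] [NormedSpace 𝕜 E]
  [NormedAddCommGroup F] [NormedSpace 𝕜 F] {f : E → F} {L H : ℝ}

theorem norm_sub_le_of_taylor {A : E →L[𝕜] F} {x y : E} (hA : ‖A‖ ≤ L)
    (htaylor : ‖f x - f y - A (x - y)‖ ≤ H * ‖x - y‖ ^ 2) :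
    ‖f x - f y‖ ≤ (L + H * ‖x - y‖) * ‖x - y‖ :=
  calc ‖f x - f y‖ = ‖f x - f y - A (x - y) + A (x - y)‖ := by rw [sub_add_cancel]
    _ ≤ ‖f x - f y - A (x - y)‖ + ‖A (x - y)‖ := norm_add_le _ _
    _ ≤ H * ‖x - y‖ ^ 2 + L * ‖x - y‖ := add_le_add htaylor (A.le_of_opNorm_le hA _)
    _ = (L + H * ‖x - y‖) * ‖x - y‖ := by ring

-- `H` may be negative when `s` has at most one point, so `r = ρ` does not imply the case `ρ ≤ r`.
theorem ediam_image_le_of_taylor {f' : E → E →L[𝕜] F} {s : Set E} {ρ r : ℝ}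
    (hdiam : ediam s ≤ ENNReal.ofReal ρ) (hρr : ρ ≤ r) (hf' : ∀ x ∈ s, ‖f' x‖ ≤ L)
    (htaylor : ∀ x ∈ s, ∀ y ∈ s, ‖f x - f y - f' y (x - y)‖ ≤ H * ‖x - y‖ ^ 2) :
    ediam (f '' s) ≤ ENNReal.ofReal ((L + H * r) * ρ) := by
  refine ediam_image_le_iff.2 fun x hx y hy => ?_
  obtain rfl | hxy := eq_or_ne x y
  · simp
  have hpos : 0 < ‖x - y‖ := norm_sub_pos_iff.2 hxy
  have hL : 0 ≤ L := (norm_nonneg _).trans (hf' y hy)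
  have hH : 0 ≤ H :=
    nonneg_of_mul_nonneg_left ((norm_nonneg _).trans (htaylor x hx y hy)) (pow_pos hpos 2)
  have hρ : ‖x - y‖ ≤ ρ := by
    have hdist := edist_le_of_ediam_le hx hy hdiam
    rw [edist_dist, dist_eq_norm, ENNReal.ofReal_le_ofReal_iff'] at hdist
    exact hdist.resolve_right hpos.not_ge
  rw [edist_dist, dist_eq_norm]
  refine ENNReal.ofReal_le_ofReal ((norm_sub_le_of_taylor (hf' y hy) (htaylor x hx y hy)).trans ?_)
  have hr : 0 ≤ r := (hpos.le.trans hρ).trans hρr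
  gcongr
  exact hρ.trans hρr

end Oscillation

section CellAverage

variable {α F : Type*} [MeasurableSpace α] [NormedAddCommGroup F] {μ : Measure α}

theorem integrableOn_of_ediam_image_ne_top {f : α → F} {s : Set α} (hs : MeasurableSet s)
    (hμs : μ s ≠ ∞) (hf : AEStronglyMeasurable f (μ.restrict s)) (hfs : ediam (f '' s) ≠ ∞) :
    IntegrableOn f s μ := by
  obtain ⟨C, hC⟩ := (isBounded_iff_ediam_ne_top.2 hfs).exists_norm_le
  exact .of_bound hμs.lt_top hf C <|
    ae_restrict_of_forall_mem hs fun x hx => hC _ (mem_image_of_mem f hx)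

variable [NormedSpace ℝ F]

theorem edist_setAverage_le_ediam_image [CompleteSpace F] {f : α → F} {s : Set α} {x : α}
    (hs : MeasurableSet s) (hμs₀ : μ s ≠ 0) (hμs : μ s ≠ ∞)
    (hf : AEStronglyMeasurable f (μ.restrict s)) (hx : x ∈ s) :
    edist (f x) (⨍ y in s, f y ∂μ) ≤ ediam (f '' s) := by
  by_cases hfs : ediam (f '' s) = ∞
  · exact hfs ▸ le_top
  have hull : ∀ y ∈ s, f y ∈ convexHull ℝ (f '' s) := fun y hy =>
    subset_convexHull ℝ _ (mem_image_of_mem f hy)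
  rw [← convexHull_ediam, ← ediam_closure]
  exact edist_le_ediam_of_mem (subset_closure (hull x hx)) <|
    (convex_convexHull ℝ _).set_average_mem_closure hμs₀ hμs (ae_restrict_of_forall_mem hs hull)
      (integrableOn_of_ediam_image_ne_top hs hμs hf hfs)

variable {ι : Type*} {cell : ι → Set α} {f fhat : α → F}

/-- `fhat` is the projection of `f` onto functions constant on each cell: `μ`-almost everywhere on
a cell it equals the average of `f` there. Nothing is required outside the union of the cells. -/
def IsCellwiseAverage (μ : Measure α) (cell : ι → Set α) (f fhat : α → F) : Prop :=
  ∀ i, ∀ᵐ x ∂μ.restrict (cell i), fhat x = ⨍ y in cell i, f y ∂μ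

variable [Countable ι]

theorem isCellwiseAverage_of_aedisjoint (hcell : ∀ i, MeasurableSet (cell i))
    (hdisj : Pairwise fun i j => AEDisjoint μ (cell i) (cell j))
    (hfhat : ∀ x i, x ∈ cell i → (∀ j, j ≠ i → x ∉ cell j) →
      fhat x = ⨍ y in cell i, f y ∂μ) :
    IsCellwiseAverage μ cell f fhat := by
  intro i
  have honly : ∀ᵐ x ∂μ, ∀ j, j ≠ i → x ∉ cell i ∩ cell j :=
    ae_all_iff.2 fun j => Filter.eventually_imp_distrib_left.2 fun hji =>
      measure_eq_zero_iff_ae_notMem.1 (hdisj hji.symm)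
  filter_upwards [ae_restrict_mem (hcell i), ae_restrict_of_ae honly] with x hxi hx
  exact hfhat x i hxi fun j hji hxj => hx j hji ⟨hxi, hxj⟩

theorem IsCellwiseAverage.ae_edist_le [CompleteSpace F] {C : ℝ≥0∞}
    (hfhat : IsCellwiseAverage μ cell f fhat) (hcell : ∀ i, MeasurableSet (cell i))
    (hμcell : ∀ i, μ (cell i) ≠ ∞) (hcover : ∀ᵐ x ∂μ, x ∈ ⋃ i, cell i)
    (hf : ∀ i, AEStronglyMeasurable f (μ.restrict (cell i)))
    (hC : ∀ i, ediam (f '' cell i) ≤ C) :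
    ∀ᵐ x ∂μ, edist (f x) (fhat x) ≤ C := by
  rw [← Measure.restrict_eq_self_of_ae_mem hcover, ae_restrict_iUnion_iff]
  intro i
  obtain hμ₀ | hμ₀ := eq_or_ne (μ (cell i)) 0
  · simp [Measure.restrict_eq_zero.2 hμ₀]
  filter_upwards [ae_restrict_mem (hcell i), hfhat i] with x hx hfhatx
  rw [hfhatx]
  exact (edist_setAverage_le_ediam_image (hcell i) hμ₀ (hμcell i) (hf i) hx).trans (hC i)

end CellAverage

theorem projected_committor_error_bound_general {E F ι : Type*} [NormedAddCommGroup E]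
    [NormedSpace ℝ E] [MeasurableSpace E] [OpensMeasurableSpace E] [NormedAddCommGroup F]
    [NormedSpace ℝ F] [CompleteSpace F] [SecondCountableTopologyEither E F] [Countable ι]
    {μ : Measure E} {cell : ι → Set E} (hcell : ∀ i, MeasurableSet (cell i))
    (hμcell : ∀ i, μ (cell i) ≠ ∞) (hcover : ∀ᵐ x ∂μ, x ∈ ⋃ i, cell i)
    {ρ r : ℝ} (hdiam : ∀ i, ediam (cell i) ≤ ENNReal.ofReal ρ) (hρr : ρ ≤ r)
    {q : E → F} {q' : E → E →L[ℝ] F} {L H : ℝ}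
    (hderiv : ∀ i, ∀ x ∈ cell i, HasFDerivWithinAt q (q' x) (cell i) x)
    (hq' : ∀ i, ∀ x ∈ cell i, ‖q' x‖ ≤ L)
    (htaylor : ∀ i, ∀ x ∈ cell i, ∀ y ∈ cell i,
      ‖q x - q y - q' y (x - y)‖ ≤ H * ‖x - y‖ ^ 2)
    {qhat : E → F} (hqhat : IsCellwiseAverage μ cell q qhat) (p : ℝ≥0∞) :
    eLpNorm (fun x => q x - qhat x) p μ ≤
      ENNReal.ofReal ((L + H * r) * ρ) * μ univ ^ p.toReal⁻¹ := by
  have hmeas : ∀ i, AEStronglyMeasurable q (μ.restrict (cell i)) := fun i =>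
    ContinuousOn.aestronglyMeasurable (fun x hx => (hderiv i x hx).continuousWithinAt) (hcell i)
  have hosc : ∀ i, ediam (q '' cell i) ≤ ENNReal.ofReal ((L + H * r) * ρ) := fun i =>
    ediam_image_le_of_taylor (hdiam i) hρr (hq' i) (htaylor i)
  have hae := hqhat.ae_edist_le hcell hμcell hcover hmeas hosc
  simp only [edist_eq_enorm_sub] at hae
  exact eLpNorm_le_of_ae_enorm_bound hae

/-- **Theorem 3.3 (error bound for the projected committor).**
Let `S ⊆ ℝ^d` be a bounded measurable set, `μ` a probability measure with `μ(S) = 1`, and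
`{S_i}_{i ∈ I}` a finite family of convex measurable subsets of `S` with `μ(S_i) > 0`,
pairwise `μ`-null intersections, `μ(⋃ S_i) = 1` and Euclidean diameter at most `ρ ≤ 1`.
Let `q` take values in `[0,1]` on `S`, be differentiable on `S` with gradient `g` bounded by `L`
and a second-order Taylor bound with constant `H`.  If `q̂` equals the `μ`-average of `q` over
`S_i` at every point lying in exactly one cell `S_i`, then `‖q - q̂‖_{L^p(μ)} ≤ 2(L + H)ρ`
for every `p ∈ [1, ∞)`. -/
theorem projected_committor_error_bound
    (d : ℕ) {ι : Type} [Fintype ι]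
    (S : Set (EuclideanSpace ℝ (Fin d))) (hSbdd : Bornology.IsBounded S)
    (hSmeas : MeasurableSet S)
    (μ : Measure (EuclideanSpace ℝ (Fin d))) [IsProbabilityMeasure μ] (hμS : μ S = 1)
    (cell : ι → Set (EuclideanSpace ℝ (Fin d)))
    (hcellS : ∀ i, cell i ⊆ S)
    (hcellconv : ∀ i, Convex ℝ (cell i))
    (hcellmeas : ∀ i, MeasurableSet (cell i))
    (hcellpos : ∀ i, 0 < μ (cell i))
    (hnull : ∀ i j, i ≠ j → μ (cell i ∩ cell j) = 0)
    (hcover : μ (⋃ i, cell i) = 1)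
    (ρ : ℝ) (hρ0 : 0 < ρ) (hρ1 : ρ ≤ 1)
    (hdiam : ∀ i, EMetric.diam (cell i) ≤ ENNReal.ofReal ρ)
    (q : EuclideanSpace ℝ (Fin d) → ℝ)
    (hq01 : ∀ x ∈ S, q x ∈ Set.Icc (0 : ℝ) 1)
    (g : EuclideanSpace ℝ (Fin d) → EuclideanSpace ℝ (Fin d))
    (L H : ℝ)
    (hgrad : ∀ x ∈ S, HasGradientAt q (g x) x)
    (hgradL : ∀ x ∈ S, ‖g x‖ ≤ L)
    (htaylor : ∀ x ∈ S, ∀ y ∈ S,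
      |q x - q y - (inner ℝ (g y) (x - y) : ℝ)| ≤ H * ‖x - y‖ ^ 2)
    (qhat : EuclideanSpace ℝ (Fin d) → ℝ)
    (hqhat : ∀ x, ∀ i, x ∈ cell i → (∀ j, j ≠ i → x ∉ cell j) →
      qhat x = (μ (cell i)).toReal⁻¹ * ∫ y in cell i, q y ∂μ) :
    ∀ p : ℝ, 1 ≤ p →
      eLpNorm (fun x => q x - qhat x) (ENNReal.ofReal p) μ ≤
        ENNReal.ofReal (2 * (L + H) * ρ) := by
  intro p _
  have hcover_ae : ∀ᵐ x ∂μ, x ∈ ⋃ i, cell i :=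
    (mem_ae_iff_prob_eq_one (.iUnion hcellmeas)).2 hcover
  have havg : IsCellwiseAverage μ cell q qhat :=
    isCellwiseAverage_of_aedisjoint hcellmeas hnull fun x i hxi hx =>
      (hqhat x i hxi hx).trans (setAverage_eq μ q (cell i)).symm
  have hbound := projected_committor_error_bound_general hcellmeas (fun i => measure_ne_top μ _)
    hcover_ae hdiam hρ1 (q' := fun x => InnerProductSpace.toDual ℝ _ (g x))
    (fun i x hx => (hgrad x (hcellS i hx)).hasFDerivAt.hasFDerivWithinAt)
    (fun i x hx => by simpa using hgradL x (hcellS i hx))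
    (fun i x hx y hy => htaylor x (hcellS i hx) y (hcellS i hy)) havg (ENNReal.ofReal p)
  rw [measure_univ, ENNReal.one_rpow, mul_one, mul_one] at hbound
  refine hbound.trans ?_
  rw [mul_assoc 2, ENNReal.ofReal_mul zero_le_two]
  exact le_mul_of_one_le_left' (by simp)
end

section
/- Let S_i ⊆ ℝ^d be a measurable set of Euclidean diameter at most ρ > 0, let J : ℝ^d → ℝ^d be Lipschitz with constant L with respect to the Euclidean norm, let n_1, …, n_m ∈ ℝ^d be unit vectors and let N be the m × d matrix whose k-th row is n_kᵀ, and suppose there are constants 0 < c ≤ C with c‖w‖₂ ≤ ‖Nw‖₂ ≤ C‖w‖₂ for all w ∈ ℝ^d. For each k, let σ_k be a finite measure with 0 < σ_k(ℝ^d) < ∞ and σ_k(ℝ^d \ S_i) = 0, define α̂_k := (1/σ_k(ℝ^d)) ∫ ⟨n_k, J(y)⟩ σ_k(dy), let α̂ = (α̂_1, …, α̂_m) ∈ ℝ^m, and define J̃_i := (NᵀN)⁻¹ Nᵀ α̂ ∈ ℝ^d. Then for every x ∈ S_i, ‖J̃_i − J(x)‖₂ ≤ (C/c²) √m · L · ρ.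 -/
open MeasureTheory Matrix

/-!
The normal equations say that the residual `α̂ - N J̃` is orthogonal to the range of `N`, so by
Pythagoras `‖N (J̃ - u)‖ ≤ ‖α̂ - N u‖` for every competitor `u`. For `u = J x` each coordinate of
`α̂ - N u` is the deviation of a Lipschitz function on the cell from its average, hence at most
`L ρ`; this gives `c ‖J̃ - J x‖ ≤ √m L ρ`, and `1 / c ≤ C / c ^ 2`.
-/

section LeastSquares

open WithLp

variable {𝕜 : Type*} [RCLike 𝕜]

theorem norm_map_sub_le_of_inner_map_sub_eq_zero {E F : Type*} [AddCommGroup E] [Module 𝕜 E]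
    [SeminormedAddCommGroup F] [InnerProductSpace 𝕜 F] {A : E →ₗ[𝕜] F} {b : F} {v : E}
    (h : ∀ w, inner 𝕜 (A w) (b - A v) = 0) (u : E) : ‖A (v - u)‖ ≤ ‖b - A u‖ := by
  have pythagoras := norm_add_sq_eq_norm_sq_add_norm_sq_of_inner_eq_zero _ _ (h (v - u))
  rw [show A (v - u) + (b - A v) = b - A u by rw [map_sub]; abel] at pythagoras
  rw [mul_self_le_mul_self_iff (norm_nonneg _) (norm_nonneg _), pythagoras]
  exact le_add_of_nonneg_right (mul_self_nonneg _)

variable {ι κ : Type*} [Fintype ι] [Fintype κ]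

theorem norm_mulVec_sub_le_of_normal_equations {N : Matrix ι κ 𝕜} {b : ι → 𝕜} {v : κ → 𝕜}
    (hv : (Nᴴ * N) *ᵥ v = Nᴴ *ᵥ b) (u : κ → 𝕜) :
    ‖toLp 2 (N *ᵥ (v - u))‖ ≤ ‖toLp 2 (b - N *ᵥ u)‖ := by
  have residual : Nᴴ *ᵥ (b - N *ᵥ v) = 0 := by
    rw [mulVec_sub, mulVec_mulVec, hv, sub_self]
  refine norm_map_sub_le_of_inner_map_sub_eq_zero
    (A := (WithLp.linearEquiv 2 𝕜 (ι → 𝕜)).symm.toLinearMap ∘ₗ N.mulVecLin) (b := toLp 2 b)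
    (fun w ↦ ?_) u
  change inner 𝕜 (toLp 2 (N *ᵥ w)) (toLp 2 (b - N *ᵥ v)) = 0
  rw [EuclideanSpace.inner_toLp_toLp, star_mulVec, dotProduct_comm, ← dotProduct_mulVec, residual,
    dotProduct_zero]

theorem mulVec_injective_of_mul_norm_le {N : Matrix ι κ 𝕜} {c : ℝ} (hc : 0 < c)
    (hN : ∀ w : κ → 𝕜, c * ‖toLp 2 w‖ ≤ ‖toLp 2 (N *ᵥ w)‖) : Function.Injective N.mulVec := by
  refine (injective_iff_map_eq_zero N.mulVecLin).2 fun w hw ↦ ?_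
  have hcw : c * ‖toLp 2 w‖ ≤ 0 := by
    simpa [show N *ᵥ w = 0 from hw] using hN w
  simpa using nonpos_of_mul_nonpos_right hcw hc

open scoped ComplexOrder in
theorem normal_equations_of_mulVec_injective [DecidableEq κ] {N : Matrix ι κ 𝕜}
    (hN : Function.Injective N.mulVec) (b : ι → 𝕜) :
    (Nᴴ * N) *ᵥ (((Nᴴ * N)⁻¹ * Nᴴ) *ᵥ b) = Nᴴ *ᵥ b := by
  have hdet := (isUnit_iff_isUnit_det _).1 (PosDef.conjTranspose_mul_self N hN).isUnit
  rw [mulVec_mulVec, mul_nonsing_inv_cancel_left _ _ hdet]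

theorem norm_toLp_two_le_sqrt_card_mul {E : Type*} [SeminormedAddCommGroup E] {b : ι → E} {r : ℝ}
    (hb : ∀ k, ‖b k‖ ≤ r) :
    ‖toLp 2 b‖ ≤ √(Fintype.card ι) * r := by
  rcases isEmpty_or_nonempty ι with _ | ⟨⟨k⟩⟩
  · simp [PiLp.norm_eq_of_L2]
  have hr : 0 ≤ r := (norm_nonneg _).trans (hb k)
  calc ‖toLp 2 b‖ = √(∑ k, ‖b k‖ ^ 2) := PiLp.norm_eq_of_L2 _
    _ ≤ √(∑ _k : ι, r ^ 2) := by gcongr; exact hb _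
    _ = √(Fintype.card ι) * r := by simp [Real.sqrt_sq hr]

end LeastSquares

section Average

open Metric

theorem dist_average_le_of_ae_dist_le {X E : Type*} [MeasurableSpace X] [NormedAddCommGroup E]
    [NormedSpace ℝ E] [CompleteSpace E] {μ : Measure X} [IsFiniteMeasure μ] [NeZero μ] {f : X → E}
    {a : E} {r : ℝ} (hf : AEStronglyMeasurable f μ) (hr : ∀ᵐ y ∂μ, dist (f y) a ≤ r) :
    dist (⨍ y, f y ∂μ) a ≤ r := by
  have hint : Integrable f μ :=
    .of_bound hf (‖a‖ + r) (hr.mono fun _ ↦ norm_le_norm_add_const_of_dist_le)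
  exact (convex_closedBall a r).average_mem isClosed_closedBall hr hint

theorem aestronglyMeasurable_of_continuousOn_of_ae_mem {X E : Type*} [TopologicalSpace X]
    [MeasurableSpace X] [OpensMeasurableSpace X] [TopologicalSpace E]
    [TopologicalSpace.PseudoMetrizableSpace E] [SecondCountableTopology E] {μ : Measure X}
    {S : Set X} {f : X → E} (hf : ContinuousOn f S) (hS : ∀ᵐ y ∂μ, y ∈ S) :
    AEStronglyMeasurable f μ := by
  borelize E
  have hSm : NullMeasurableSet S μ := (NullMeasurableSet.of_null hS).of_compl
  simpa [Measure.restrict_eq_self_of_ae_mem hS] using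
    (hf.aemeasurable₀ hSm).aestronglyMeasurable

theorem dist_average_le_of_lipschitzOnWith {X E : Type*} [PseudoMetricSpace X] [MeasurableSpace X]
    [OpensMeasurableSpace X] [NormedAddCommGroup E] [NormedSpace ℝ E] [CompleteSpace E]
    [SecondCountableTopology E] {μ : Measure X} [IsFiniteMeasure μ] [NeZero μ] {S : Set X} {ρ : ℝ}
    {f : X → E} {K : NNReal} (hρ : 0 ≤ ρ) (hdiam : ediam S ≤ ENNReal.ofReal ρ)
    (hμ : ∀ᵐ y ∂μ, y ∈ S) (hf : LipschitzOnWith K f S) {x : X} (hx : x ∈ S) :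
    dist (⨍ y, f y ∂μ) (f x) ≤ K * ρ := by
  refine dist_average_le_of_ae_dist_le
    (aestronglyMeasurable_of_continuousOn_of_ae_mem hf.continuousOn hμ) ?_
  filter_upwards [hμ] with y hy
  have hyx : dist y x ≤ ρ := by
    rw [← ENNReal.ofReal_le_ofReal_iff hρ, ← edist_dist]
    exact edist_le_of_ediam_le hy hx hdiam
  exact (hf.dist_le_mul y hy x hx).trans (by gcongr)

theorem lipschitzOnWith_const_inner {𝕜 X E : Type*} [RCLike 𝕜] [PseudoEMetricSpace X]
    [SeminormedAddCommGroup E] [InnerProductSpace 𝕜 E] {S : Set X} {f : X → E} {K : NNReal}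
    (hf : LipschitzOnWith K f S) (a : E) :
    LipschitzOnWith (‖a‖₊ * K) (fun y ↦ inner 𝕜 a (f y)) S := by
  have hnorm : ‖innerSL 𝕜 a‖₊ = ‖a‖₊ := NNReal.eq (innerSL_apply_norm 𝕜 a)
  exact hnorm ▸ (innerSL 𝕜 a).lipschitz.comp_lipschitzOnWith hf

end Average

-- A negative `L` is possible only if all vectors have norm `0`, and then `ι` is empty.
theorem sqrt_card_mul_toNNReal_of_norm_sub_le {ι E F : Type*} [Fintype ι]
    [SeminormedAddCommGroup E] [SeminormedAddCommGroup F] {J : E → F} {L : ℝ}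
    (hJ : ∀ x y, ‖J x - J y‖ ≤ L * ‖x - y‖) {n : ι → E} (hn : ∀ k, ‖n k‖ = 1) :
    √(Fintype.card ι) * L.toNNReal = √(Fintype.card ι) * L := by
  rcases isEmpty_or_nonempty ι with _ | ⟨⟨k⟩⟩
  · simp
  have hL : 0 ≤ L := by simpa [hn k] using (norm_nonneg _).trans (hJ (n k) 0)
  rw [Real.coe_toNNReal L hL]

theorem le_div_sq_mul_of_mul_le {a b c C : ℝ} (hc : 0 < c) (hcC : c ≤ C) (ha : 0 ≤ a)
    (hab : c * a ≤ b) : a ≤ C / c ^ 2 * b := by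
  have hb : 0 ≤ b := (mul_nonneg hc.le ha).trans hab
  calc a ≤ b / c := (le_div_iff₀' hc).2 hab
    _ = c / c ^ 2 * b := by field_simp
    _ ≤ C / c ^ 2 * b := by gcongr

theorem approximate_current_pointwise_error_bound_general {ι κ : Type*} [Fintype ι] [Fintype κ]
    [DecidableEq κ] {S : Set (EuclideanSpace ℝ κ)} {ρ : ℝ} (hρ : 0 ≤ ρ)
    (hdiam : Metric.ediam S ≤ ENNReal.ofReal ρ)
    {J : EuclideanSpace ℝ κ → EuclideanSpace ℝ κ} {K : NNReal} (hJ : LipschitzOnWith K J S)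
    {n : ι → EuclideanSpace ℝ κ} (hn : ∀ k, ‖n k‖ ≤ 1)
    {N : Matrix ι κ ℝ} (hN : ∀ k j, N k j = n k j)
    {c : ℝ} (hc : 0 < c) (hlow : ∀ w : κ → ℝ, c * ‖WithLp.toLp 2 w‖ ≤ ‖WithLp.toLp 2 (N *ᵥ w)‖)
    {σ : ι → Measure (EuclideanSpace ℝ κ)} (hσ0 : ∀ k, σ k Set.univ ≠ 0)
    (hσfin : ∀ k, σ k Set.univ ≠ ⊤) (hσsupp : ∀ k, σ k Sᶜ = 0)
    {α : ι → ℝ} (hα : ∀ k, α k = (σ k Set.univ).toReal⁻¹ * ∫ y, inner ℝ (n k) (J y) ∂σ k)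
    {v : κ → ℝ} (hv : v = ((Nᵀ * N)⁻¹ * Nᵀ) *ᵥ α) {x : EuclideanSpace ℝ κ} (hx : x ∈ S) :
    c * ‖WithLp.toLp 2 v - J x‖ ≤ √(Fintype.card ι) * K * ρ := by
  have hnormal : (Nᴴ * N) *ᵥ v = Nᴴ *ᵥ α := by
    simpa only [hv, conjTranspose_eq_transpose_of_trivial] using
      normal_equations_of_mulVec_injective (mulVec_injective_of_mul_norm_le hc hlow) α
  have hNJ (k : ι) : (N *ᵥ J x) k = inner ℝ (n k) (J x) := by
    simp [PiLp.inner_apply, mulVec, dotProduct, hN, mul_comm]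
  have hflux (k : ι) : ‖(α - N *ᵥ J x) k‖ ≤ K * ρ := by
    have : IsFiniteMeasure (σ k) := ⟨(hσfin k).lt_top⟩
    have : NeZero (σ k) := ⟨fun h ↦ hσ0 k (by simp [h])⟩
    have havg : α k = ⨍ y, inner ℝ (n k) (J y) ∂σ k := by
      rw [hα, average_eq, smul_eq_mul, measureReal_def]
    have hlip : LipschitzOnWith K (fun y ↦ inner ℝ (n k) (J y)) S :=
      (lipschitzOnWith_const_inner hJ (n k)).weaken (mul_le_of_le_one_left' (hn k))
    rw [Pi.sub_apply, hNJ, havg, ← dist_eq_norm]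
    exact dist_average_le_of_lipschitzOnWith hρ hdiam (hσsupp k) hlip hx
  calc c * ‖WithLp.toLp 2 v - J x‖ ≤ ‖WithLp.toLp 2 (N *ᵥ (v - J x))‖ := hlow (v - J x)
    _ ≤ ‖WithLp.toLp 2 (α - N *ᵥ J x)‖ := norm_mulVec_sub_le_of_normal_equations hnormal (J x)
    _ ≤ √(Fintype.card ι) * (K * ρ) := norm_toLp_two_le_sqrt_card_mul hflux
    _ = √(Fintype.card ι) * K * ρ := (mul_assoc ..).symm

/-- **Pointwise error bound (3.13) from the proof of Theorem 3.5.**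
Let `S_i ⊆ ℝ^d` have Euclidean diameter at most `ρ`, let `J` be `L`-Lipschitz, let
`n_1, …, n_m` be unit vectors forming the rows of the matrix `N`, whose singular values are
bounded between `c` and `C`.  With `σ_k` finite measures concentrated on `S_i`,
`α̂_k` the `σ_k`-average of `⟨n_k, J⟩`, and `J̃_i := (NᵀN)⁻¹Nᵀα̂` the least-squares solution of
the normal equations, we have `‖J̃_i − J(x)‖₂ ≤ (C/c²)√m · L · ρ` for every `x ∈ S_i`. -/
theorem approximate_current_pointwise_error_bound
    (d m : ℕ) (Si : Set (EuclideanSpace ℝ (Fin d)))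
    (ρ : ℝ) (hρ : 0 < ρ) (hdiam : EMetric.diam Si ≤ ENNReal.ofReal ρ)
    (J : EuclideanSpace ℝ (Fin d) → EuclideanSpace ℝ (Fin d))
    (L : ℝ) (hJ : ∀ x y, ‖J x - J y‖ ≤ L * ‖x - y‖)
    (n : Fin m → EuclideanSpace ℝ (Fin d)) (hn : ∀ k, ‖n k‖ = 1)
    (N : Matrix (Fin m) (Fin d) ℝ) (hN : ∀ k j, N k j = n k j)
    (c C : ℝ) (hc : 0 < c) (hcC : c ≤ C)
    (hlow : ∀ w : Fin d → ℝ,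
      c * ‖(EuclideanSpace.equiv (Fin d) ℝ).symm w‖ ≤
        ‖(EuclideanSpace.equiv (Fin m) ℝ).symm (N.mulVec w)‖)
    (hup : ∀ w : Fin d → ℝ,
      ‖(EuclideanSpace.equiv (Fin m) ℝ).symm (N.mulVec w)‖ ≤
        C * ‖(EuclideanSpace.equiv (Fin d) ℝ).symm w‖)
    (σ : Fin m → Measure (EuclideanSpace ℝ (Fin d)))
    (hσ0 : ∀ k, σ k Set.univ ≠ 0) (hσfin : ∀ k, σ k Set.univ ≠ ⊤)
    (hσsupp : ∀ k, σ k Siᶜ = 0)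
    (αhat : Fin m → ℝ)
    (hαhat : ∀ k, αhat k =
      ((σ k) Set.univ).toReal⁻¹ * ∫ y, (inner ℝ (n k) (J y) : ℝ) ∂(σ k))
    (Jt : Fin d → ℝ) (hJt : Jt = ((Nᵀ * N)⁻¹ * Nᵀ).mulVec αhat) :
    ∀ x ∈ Si,
      ‖(EuclideanSpace.equiv (Fin d) ℝ).symm Jt - J x‖ ≤
        (C / c ^ 2) * Real.sqrt m * L * ρ := by
  intro x hx
  have hlip : LipschitzOnWith L.toNNReal J Si :=
    .of_dist_le' fun y _ z _ ↦ by simpa only [dist_eq_norm] using hJ y z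
  have hbound := approximate_current_pointwise_error_bound_general hρ.le hdiam hlip
    (fun k ↦ (hn k).le) hN hc hlow hσ0 hσfin hσsupp hαhat hJt hx
  rw [sqrt_card_mul_toNNReal_of_norm_sub_le hJ hn, Fintype.card_fin] at hbound
  exact (le_div_sq_mul_of_mul_le hc hcC (norm_nonneg _) hbound).trans_eq (by ring)
end

section
/- In the setting of the L² error bound for the approximate probability current, suppose for each k ∈ ℕ one has a finite family {S_i^k}_{i ∈ I(k)} of measurable subsets of S of Euclidean diameter at most ρ_k, satisfying all the hypotheses of that bound, with associated piecewise-constant approximate probability current J̃^k, and suppose there is a constant 0 < C < ∞, independent of k, with sup_{k ∈ ℕ} sup_{i ∈ I(k)} (C_i^k/(c_i^k)²)√(m_i^k) ≤ C. If J : ℝ^d → ℝ^d is Lipschitz with constant L and ρ_k → 0 as k → ∞, then ‖J̃^k − J‖_{L²(μ; ℝ^d)} ≤ C L ρ_k for every k, and in particular ‖J̃^k − J‖_{L²(μ; ℝ^d)} → 0 as k → ∞. -/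
open MeasureTheory Matrix

/-- The setting of Theorem 3.5 of the paper: a finite family of measurable cells of Euclidean
diameter at most `ρ` covering `μ`-almost all of `S` with pairwise `μ`-null intersections;
for each cell, unit (outer normal) vectors forming a matrix `N_i` whose singular values are
bounded between `c i > 0` and `Cmax i`; finite facet measures concentrated on the cell; and the
piecewise-constant approximate probability current `Jtilde`, equal on each cell (at points lying
in exactly one cell) to the least-squares solution `(N_iᵀN_i)⁻¹N_iᵀα̂_i` of the normal equations,
where `α̂_{i,k}` is the facet average of the normal component `⟨n_{i,k}, J⟩`. -/
structure VoronoiCurrentApprox (d : ℕ) (S : Set (EuclideanSpace ℝ (Fin d)))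
    (μ : Measure (EuclideanSpace ℝ (Fin d)))
    (J : EuclideanSpace ℝ (Fin d) → EuclideanSpace ℝ (Fin d)) (ρ : ℝ) where
  ι : Type
  fin : Fintype ι
  ne : Nonempty ι
  cell : ι → Set (EuclideanSpace ℝ (Fin d))
  cell_subset : ∀ i, cell i ⊆ S
  cell_meas : ∀ i, MeasurableSet (cell i)
  inter_null : ∀ i j, i ≠ j → μ (cell i ∩ cell j) = 0
  cover : μ (⋃ i, cell i) = 1
  diam_le : ∀ i, EMetric.diam (cell i) ≤ ENNReal.ofReal ρ
  m : ι → ℕ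
  n : ∀ i, Fin (m i) → EuclideanSpace ℝ (Fin d)
  n_norm : ∀ i k, ‖n i k‖ = 1
  N : ∀ i, Matrix (Fin (m i)) (Fin d) ℝ
  N_rows : ∀ i k j, N i k j = n i k j
  c : ι → ℝ
  Cmax : ι → ℝ
  c_pos : ∀ i, 0 < c i
  c_le_Cmax : ∀ i, c i ≤ Cmax i
  sv_lower : ∀ i, ∀ w : Fin d → ℝ,
    c i * ‖(EuclideanSpace.equiv (Fin d) ℝ).symm w‖ ≤
      ‖(EuclideanSpace.equiv (Fin (m i)) ℝ).symm ((N i).mulVec w)‖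
  sv_upper : ∀ i, ∀ w : Fin d → ℝ,
    ‖(EuclideanSpace.equiv (Fin (m i)) ℝ).symm ((N i).mulVec w)‖ ≤
      Cmax i * ‖(EuclideanSpace.equiv (Fin d) ℝ).symm w‖
  σ : ∀ i, Fin (m i) → Measure (EuclideanSpace ℝ (Fin d))
  σ_ne_zero : ∀ i k, σ i k Set.univ ≠ 0
  σ_ne_top : ∀ i k, σ i k Set.univ ≠ ⊤
  σ_supp : ∀ i k, σ i k (cell i)ᶜ = 0
  Jtilde : EuclideanSpace ℝ (Fin d) → EuclideanSpace ℝ (Fin d)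
  Jtilde_eq : ∀ x, ∀ i, x ∈ cell i → (∀ j, j ≠ i → x ∉ cell j) →
    Jtilde x = (EuclideanSpace.equiv (Fin d) ℝ).symm
      ((((N i)ᵀ * N i)⁻¹ * (N i)ᵀ).mulVec
        (fun k => ((σ i k) Set.univ).toReal⁻¹ * ∫ y, (inner ℝ (n i k) (J y) : ℝ) ∂(σ i k)))

/-! On a cell, each facet average of a normal component of `J` is within `L ρ` of that component of
`J x`, for any point `x` of the cell. So the data `α̂_i` lie within `√m_i · L ρ` of `N_i (J x)`.
The map `N_i` sends the least-squares solution to the orthogonal projection of `α̂_i` onto the range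
of `N_i`, so solving for `J̃` costs only a factor `1 / c_i`. This bounds the error almost everywhere
by `(√m_i / c_i) L ρ`, and `√m_i / c_i ≤ (C_i / c_i²) √m_i`. -/

open scoped ENNReal Function NNReal

lemma norm_le_sqrt_card_mul_of_forall_norm_le {ι : Type*} [Fintype ι] {β : ι → Type*}
    [∀ i, SeminormedAddCommGroup (β i)] {u : PiLp 2 β} {r : ℝ} (hr : 0 ≤ r)
    (hu : ∀ i, ‖u i‖ ≤ r) : ‖u‖ ≤ √(Fintype.card ι) * r := by
  rw [PiLp.norm_eq_of_L2, ← Real.sqrt_sq hr, ← Real.sqrt_mul (Nat.cast_nonneg _)]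
  refine Real.sqrt_le_sqrt ?_
  calc ∑ i, ‖u i‖ ^ 2 ≤ ∑ _ : ι, r ^ 2 := by gcongr with i; exact hu i
    _ = Fintype.card ι * r ^ 2 := by simp

section LeastSquares

variable {𝕜 : Type*} [RCLike 𝕜]

lemma norm_map_sub_le_of_inner_eq_zero {E F : Type*} [AddCommGroup E] [Module 𝕜 E]
    [SeminormedAddCommGroup F] [InnerProductSpace 𝕜 F] (A : E →ₗ[𝕜] F) {a : F} {x : E}
    (hx : ∀ w, inner 𝕜 (A w) (a - A x) = 0) (v : E) : ‖A (x - v)‖ ≤ ‖a - A v‖ := by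
  have pythagoras := norm_add_sq_eq_norm_sq_add_norm_sq_of_inner_eq_zero _ _ (hx (x - v))
  have decomposition : A (x - v) + (a - A x) = a - A v := by rw [map_sub]; abel
  rw [decomposition] at pythagoras
  refine nonneg_le_nonneg_of_sq_le_sq (norm_nonneg _) ?_
  linarith only [pythagoras, mul_self_nonneg ‖a - A x‖]

variable {m n : Type*} [Fintype m] [Fintype n] [DecidableEq n]

/-- The solution `(NᴴN)⁻¹Nᴴa` of the normal equations, minimising `‖a - N x‖` over `x`. The matrix
inverse is a junk value unless `N` has full column rank. -/
noncomputable def leastSquares (N : Matrix m n 𝕜) (a : EuclideanSpace 𝕜 m) :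
    EuclideanSpace 𝕜 n :=
  WithLp.toLp 2 (((Nᴴ * N)⁻¹ * Nᴴ) *ᵥ a.ofLp)

open scoped ComplexOrder in
lemma inner_toEuclideanLin_sub_leastSquares_eq_zero {N : Matrix m n 𝕜}
    (hN : Function.Injective N.mulVec) (a : EuclideanSpace 𝕜 m) (w : EuclideanSpace 𝕜 n) :
    inner 𝕜 (N.toEuclideanLin w) (a - N.toEuclideanLin (leastSquares N a)) = 0 := by
  classical
  have gram_det_isUnit : IsUnit (Nᴴ * N).det :=
    (isUnit_iff_isUnit_det _).1 (PosDef.conjTranspose_mul_self N hN).isUnit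
  have normal_equations :
      Nᴴ.toEuclideanLin (a - N.toEuclideanLin (leastSquares N a)) = 0 := by
    simp only [leastSquares, map_sub, toLpLin_apply, mulVec_mulVec, ← Matrix.mul_assoc,
      mul_nonsing_inv _ gram_det_isUnit, Matrix.one_mul, sub_self]
  rw [← LinearMap.adjoint_inner_right, ← toEuclideanLin_conjTranspose_eq_adjoint,
    normal_equations, inner_zero_right]

lemma mul_norm_leastSquares_sub_le {N : Matrix m n 𝕜} {c : ℝ} (hc : 0 < c)
    (hN : ∀ w, c * ‖w‖ ≤ ‖N.toEuclideanLin w‖) (a : EuclideanSpace 𝕜 m)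
    (v : EuclideanSpace 𝕜 n) :
    c * ‖leastSquares N a - v‖ ≤ ‖a - N.toEuclideanLin v‖ := by
  have hker (w : n → 𝕜) (hw : N *ᵥ w = 0) : w = 0 := by
    have hle := hN (WithLp.toLp 2 w)
    rw [toLpLin_apply, hw, WithLp.toLp_zero, norm_zero] at hle
    simpa using nonpos_of_mul_nonpos_right hle hc
  have hinj : Function.Injective N.mulVec :=
    (injective_iff_map_eq_zero N.mulVecLin).2 hker
  exact (hN _).trans <|
    norm_map_sub_le_of_inner_eq_zero _
      (inner_toEuclideanLin_sub_leastSquares_eq_zero hinj a) v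

end LeastSquares

section Measure

variable {α E : Type*} {mα : MeasurableSpace α} {μ : Measure α} [NormedAddCommGroup E]

lemma norm_average_sub_le_of_ae_norm_sub_le [NormedSpace ℝ E] [CompleteSpace E]
    [IsFiniteMeasure μ] [NeZero μ] {f : α → E} (hf : AEStronglyMeasurable f μ) {a : E} {r : ℝ}
    (hr : ∀ᵐ x ∂μ, ‖f x - a‖ ≤ r) : ‖⨍ x, f x ∂μ - a‖ ≤ r := by
  have hint : Integrable f μ := by
    refine .of_bound hf (‖a‖ + r) ?_
    filter_upwards [hr] with x hx
    exact (norm_le_norm_add_norm_sub' _ _).trans (by gcongr)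
  have hmem : ∀ᵐ x ∂μ, f x ∈ Metric.closedBall a r := by
    simpa only [mem_closedBall_iff_norm] using hr
  exact mem_closedBall_iff_norm.1 <|
    (convex_closedBall a r).average_mem Metric.isClosed_closedBall hmem hint

lemma eLpNorm_le_eLpNorm_top [IsProbabilityMeasure μ] (f : α → E) (p : ℝ≥0∞) :
    eLpNorm f p μ ≤ eLpNorm f ∞ μ := by
  rcases eq_or_ne p 0 with rfl | hp0
  · simp
  rcases eq_or_ne p ∞ with rfl | hptop
  · rfl
  rw [eLpNorm_eq_eLpNorm' hp0 hptop, eLpNorm_exponent_top]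
  exact eLpNorm'_le_eLpNormEssSup (ENNReal.toReal_pos hp0 hptop)

lemma ae_forall_mem_imp_eq {ι : Type*} [Countable ι] {s : ι → Set α}
    (hs : Pairwise (AEDisjoint μ on s)) :
    ∀ᵐ x ∂μ, ∀ i j, x ∈ s i → x ∈ s j → i = j := by
  refine ae_all_iff.2 fun i => ae_all_iff.2 fun j => ?_
  rcases eq_or_ne i j with rfl | hij
  · exact .of_forall fun _ _ _ => rfl
  · filter_upwards [measure_eq_zero_iff_ae_notMem.1 (hs hij)] with x hx hi hj
    exact absurd ⟨hi, hj⟩ hx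

end Measure

namespace VoronoiCurrentApprox

variable {d : ℕ} {S : Set (EuclideanSpace ℝ (Fin d))} {μ : Measure (EuclideanSpace ℝ (Fin d))}
  {J : EuclideanSpace ℝ (Fin d) → EuclideanSpace ℝ (Fin d)} {ρ : ℝ}
  (T : VoronoiCurrentApprox d S μ J ρ)

/-- The vector `α̂_i` of averages of the normal components of `J` over the facets of cell `i`,
which is the data of the least-squares problem on that cell. -/
noncomputable def facetAverage (i : T.ι) : EuclideanSpace ℝ (Fin (T.m i)) :=
  WithLp.toLp 2 fun k => ⨍ y, inner ℝ (T.n i k) (J y) ∂T.σ i k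

lemma toEuclideanLin_N_apply (i : T.ι) (v : EuclideanSpace ℝ (Fin d)) (k : Fin (T.m i)) :
    (T.N i).toEuclideanLin v k = inner ℝ (T.n i k) v := by
  simp [toLpLin_apply, mulVec, dotProduct, PiLp.inner_apply, T.N_rows, mul_comm]

lemma ae_exists_Jtilde_eq_leastSquares [IsProbabilityMeasure μ] :
    ∀ᵐ x ∂μ, ∃ i, x ∈ T.cell i ∧ T.Jtilde x = leastSquares (T.N i) (T.facetAverage i) := by
  have := T.fin
  have hcover : ∀ᵐ x ∂μ, x ∈ ⋃ i, T.cell i :=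
    (prob_compl_eq_zero_iff (.iUnion T.cell_meas)).2 T.cover
  filter_upwards [hcover, ae_forall_mem_imp_eq fun i j hij => T.inter_null i j hij]
    with x hx hunique
  obtain ⟨i, hi⟩ := Set.mem_iUnion.1 hx
  refine ⟨i, hi, (T.Jtilde_eq x i hi fun j hji hj => hji (hunique j i hj hi)).trans ?_⟩
  simp only [leastSquares, facetAverage, average_eq, conjTranspose_eq_transpose_of_trivial,
    smul_eq_mul]
  rfl

lemma sqrt_m_div_c_le (i : T.ι) : √(T.m i) / T.c i ≤ T.Cmax i / T.c i ^ 2 * √(T.m i) := by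
  have hc := T.c_pos i
  calc √(T.m i) / T.c i = T.c i / T.c i ^ 2 * √(T.m i) := by field_simp
    _ ≤ T.Cmax i / T.c i ^ 2 * √(T.m i) := by gcongr; exact T.c_le_Cmax i

lemma aestronglyMeasurable_σ (hJ : ContinuousOn J S) (i : T.ι) (k : Fin (T.m i)) :
    AEStronglyMeasurable J (T.σ i k) := by
  have hrestrict : (T.σ i k).restrict (T.cell i) = T.σ i k :=
    Measure.restrict_eq_self_of_ae_mem (T.σ_supp i k)
  rw [← hrestrict]
  exact (hJ.mono (T.cell_subset i)).aestronglyMeasurable (T.cell_meas i)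

variable {L : ℝ≥0} (hJ : LipschitzOnWith L J S) (hρ : 0 ≤ ρ)
include hJ hρ

lemma norm_sub_le_of_mem_cell {i : T.ι} {x y : EuclideanSpace ℝ (Fin d)}
    (hy : y ∈ T.cell i) (hx : x ∈ T.cell i) : ‖J y - J x‖ ≤ L * ρ := by
  have hdist : dist y x ≤ ρ := (edist_le_ofReal hρ).1 <|
    (Metric.edist_le_ediam_of_mem hy hx).trans (T.diam_le i)
  calc ‖J y - J x‖ = dist (J y) (J x) := (dist_eq_norm _ _).symm
    _ ≤ L * dist y x := hJ.dist_le_mul y (T.cell_subset i hy) x (T.cell_subset i hx)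
    _ ≤ L * ρ := by gcongr

lemma norm_facetAverage_apply_sub_le {i : T.ι} {x : EuclideanSpace ℝ (Fin d)}
    (hx : x ∈ T.cell i) (k : Fin (T.m i)) :
    ‖T.facetAverage i k - inner ℝ (T.n i k) (J x)‖ ≤ L * ρ := by
  have : IsFiniteMeasure (T.σ i k) := ⟨(T.σ_ne_top i k).lt_top⟩
  have : NeZero (T.σ i k) := ⟨fun h => T.σ_ne_zero i k (by simp [h])⟩
  have hmem : ∀ᵐ y ∂T.σ i k, y ∈ T.cell i := T.σ_supp i k
  refine norm_average_sub_le_of_ae_norm_sub_le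
    ((T.aestronglyMeasurable_σ hJ.continuousOn i k).const_inner) ?_
  filter_upwards [hmem] with y hy
  calc ‖inner ℝ (T.n i k) (J y) - inner ℝ (T.n i k) (J x)‖
      = ‖inner ℝ (T.n i k) (J y - J x)‖ := by rw [inner_sub_right]
    _ ≤ ‖T.n i k‖ * ‖J y - J x‖ := norm_inner_le_norm _ _
    _ = ‖J y - J x‖ := by rw [T.n_norm, one_mul]
    _ ≤ L * ρ := T.norm_sub_le_of_mem_cell hJ hρ hy hx

lemma norm_facetAverage_sub_le {i : T.ι} {x : EuclideanSpace ℝ (Fin d)} (hx : x ∈ T.cell i) :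
    ‖T.facetAverage i - (T.N i).toEuclideanLin (J x)‖ ≤ √(T.m i) * (L * ρ) := by
  have hcomponents (k : Fin (T.m i)) :
      ‖(T.facetAverage i - (T.N i).toEuclideanLin (J x)) k‖ ≤ L * ρ := by
    rw [PiLp.sub_apply, toEuclideanLin_N_apply]
    exact T.norm_facetAverage_apply_sub_le hJ hρ hx k
  simpa only [Fintype.card_fin] using
    norm_le_sqrt_card_mul_of_forall_norm_le (by positivity) hcomponents

lemma norm_leastSquares_facetAverage_sub_le {i : T.ι} {x : EuclideanSpace ℝ (Fin d)}
    (hx : x ∈ T.cell i) :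
    ‖leastSquares (T.N i) (T.facetAverage i) - J x‖ ≤ √(T.m i) / T.c i * (L * ρ) := by
  rw [div_mul_eq_mul_div, le_div_iff₀' (T.c_pos i)]
  exact (mul_norm_leastSquares_sub_le (T.c_pos i) (fun w => T.sv_lower i w.ofLp) _ _).trans
    (T.norm_facetAverage_sub_le hJ hρ hx)

lemma ae_norm_Jtilde_sub_le [IsProbabilityMeasure μ] {C : ℝ}
    (hC : ∀ i, √(T.m i) / T.c i ≤ C) : ∀ᵐ x ∂μ, ‖T.Jtilde x - J x‖ ≤ C * L * ρ := by
  filter_upwards [T.ae_exists_Jtilde_eq_leastSquares] with x ⟨i, hx, hJtilde⟩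
  calc ‖T.Jtilde x - J x‖ ≤ √(T.m i) / T.c i * (L * ρ) := by
        rw [hJtilde]; exact T.norm_leastSquares_facetAverage_sub_le hJ hρ hx
    _ ≤ C * (L * ρ) := by gcongr; exact hC i
    _ = C * L * ρ := (mul_assoc _ _ _).symm

end VoronoiCurrentApprox

theorem approximate_current_continuum_limit_general {d : ℕ} {S : Set (EuclideanSpace ℝ (Fin d))}
    {μ : Measure (EuclideanSpace ℝ (Fin d))} [IsProbabilityMeasure μ]
    {J : EuclideanSpace ℝ (Fin d) → EuclideanSpace ℝ (Fin d)}
    {L : ℝ≥0} (hJ : LipschitzOnWith L J S) {ρ : ℕ → ℝ} (hρ : ∀ k, 0 ≤ ρ k)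
    (hρ0 : Filter.Tendsto ρ Filter.atTop (nhds 0))
    (T : ∀ k, VoronoiCurrentApprox d S μ J (ρ k)) {C : ℝ}
    (hC : ∀ k i, √((T k).m i) / (T k).c i ≤ C) :
    (∀ k, eLpNorm (fun x => (T k).Jtilde x - J x) ∞ μ ≤ ENNReal.ofReal (C * L * ρ k)) ∧
      Filter.Tendsto (fun k => eLpNorm (fun x => (T k).Jtilde x - J x) ∞ μ)
        Filter.atTop (nhds 0) := by
  have hbound (k : ℕ) :
      eLpNorm (fun x => (T k).Jtilde x - J x) ∞ μ ≤ ENNReal.ofReal (C * L * ρ k) := by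
    rw [eLpNorm_exponent_top]
    exact eLpNormEssSup_le_of_ae_bound ((T k).ae_norm_Jtilde_sub_le hJ (hρ k) (hC k))
  have hlimit : Filter.Tendsto (fun k => ENNReal.ofReal (C * L * ρ k)) Filter.atTop (nhds 0) := by
    simpa only [mul_zero, ENNReal.ofReal_zero] using
      ENNReal.tendsto_ofReal (hρ0.const_mul (C * L))
  exact ⟨hbound, tendsto_of_tendsto_of_tendsto_of_le_of_le tendsto_const_nhds hlimit
    (fun _ => zero_le) hbound⟩

/-- **Corollary 3.6 (convergence of the approximate probability current in the continuum
limit).**  Suppose for each `k ∈ ℕ` one has a tessellation of width `ρ_k` satisfying the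
hypotheses of Theorem 3.5, with approximate probability current `J̃^k`, and suppose the
tessellation constants `(C_i^k/(c_i^k)²)√(m_i^k)` are bounded by a constant `C` uniformly in
`k` and `i`.  If `J` is `L`-Lipschitz and `ρ_k → 0`, then
`‖J̃^k − J‖_{L²(μ;ℝ^d)} ≤ C L ρ_k` for every `k`, and in particular
`‖J̃^k − J‖_{L²(μ;ℝ^d)} → 0` as `k → ∞`. -/
theorem approximate_current_continuum_limit
    (d : ℕ) (S : Set (EuclideanSpace ℝ (Fin d))) (hSmeas : MeasurableSet S)
    (μ : Measure (EuclideanSpace ℝ (Fin d))) [IsProbabilityMeasure μ] (hμS : μ S = 1)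
    (J : EuclideanSpace ℝ (Fin d) → EuclideanSpace ℝ (Fin d))
    (L : ℝ) (hL : 0 ≤ L) (hJ : ∀ x y, ‖J x - J y‖ ≤ L * ‖x - y‖)
    (ρ : ℕ → ℝ) (hρpos : ∀ k, 0 < ρ k)
    (hρ0 : Filter.Tendsto ρ Filter.atTop (nhds 0))
    (T : ∀ k : ℕ, VoronoiCurrentApprox d S μ J (ρ k))
    (C : ℝ) (hC0 : 0 < C)
    (hCbound : ∀ k, ∀ i : (T k).ι,
      ((T k).Cmax i / (T k).c i ^ 2) * Real.sqrt ((T k).m i) ≤ C) :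
    (∀ k, eLpNorm (fun x => (T k).Jtilde x - J x) 2 μ ≤ ENNReal.ofReal (C * L * ρ k)) ∧
      Filter.Tendsto (fun k => eLpNorm (fun x => (T k).Jtilde x - J x) 2 μ)
        Filter.atTop (nhds 0) := by
  have huniform := approximate_current_continuum_limit_general (L := ⟨L, hL⟩)
    (.of_dist_le_mul fun x _ y _ => by
      rw [dist_eq_norm, dist_eq_norm]; exact hJ x y) (fun k => (hρpos k).le) hρ0 T
    fun k i => ((T k).sqrt_m_div_c_le i).trans (hCbound k i)
  have hmono := fun k => eLpNorm_le_eLpNorm_top (μ := μ) (fun x => (T k).Jtilde x - J x) 2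
  exact ⟨fun k => (hmono k).trans (huniform.1 k),
    tendsto_of_tendsto_of_tendsto_of_le_of_le tendsto_const_nhds huniform.2
      (fun _ => zero_le) hmono⟩
end
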